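/- Let Φ be of type B_n, C_n, or D_n, let I ⊆ Δ be standard, and let λ be an integral Φ_I-regular weight with Φ_{λ̄} = Φ_J. Let 1 ≤ i ≤ n with a := |λ_i| ≠ 0, and let 1 ≤ s ≤ m be such that q_{s−1} < i ≤ q_s. If there exists 1 ≤ t ≤ m such that (1) n_s^λ(a) = 1, (2) n_s^λ(0) + n_t^λ(0) = 1, and (3) 1 ≤ n_t^λ(0) + n_t^λ(a) ≤ 2, then λ ⟷ s_{e_i}λ. -/

import Mathlib

namespace JantzenBlocks

open scoped Classical

/-- The three classical types `B`, `C`, `D`. -/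
inductive CType : Type
  | B | C | D
deriving DecidableEq

/-- The weight space `ℝ^n`. -/
abbrev V (n : ℕ) := Fin n → ℝ

noncomputable section

/-- The standard inner product on `ℝ^n`. -/
def inn {n : ℕ} (x y : V n) : ℝ := ∑ i, x i * y i

/-- The standard basis vector `e i`. -/
def ee {n : ℕ} (i : Fin n) : V n := Pi.single i 1

/-- The reflection `s_v` in the vector `v`. -/
def sRefl {n : ℕ} (v x : V n) : V n := x - (2 * inn x v / inn v v) • v

/-- The roots `±e_i ± e_j` (`i ≠ j`), i.e. the root system of type `D_n`. -/
def DRoots (n : ℕ) : Set (V n) :=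
  {v | ∃ i j : Fin n, i ≠ j ∧ (v = ee i + ee j ∨ v = ee i - ee j ∨ v = -ee i - ee j)}

/-- The ambient root system `Φ` of type `B_n`, `C_n` or `D_n`. -/
def Phi (n : ℕ) : CType → Set (V n)
  | CType.B => DRoots n ∪ {v | ∃ i : Fin n, v = ee i ∨ v = -ee i}
  | CType.C => DRoots n ∪ {v | ∃ i : Fin n, v = (2:ℝ) • ee i ∨ v = -((2:ℝ) • ee i)}
  | CType.D => DRoots n

/-- The standard positive system `Φ⁺`: roots whose first nonzero coordinate is positive. -/
def PhiPos (n : ℕ) (ct : CType) : Set (V n) :=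
  {v | v ∈ Phi n ct ∧ ∃ i : Fin n, 0 < v i ∧ ∀ j : Fin n, j < i → v j = 0}

/-- The simple root `α_{i+1}` (`0`-based index `i`). -/
def alphaR (n : ℕ) (ct : CType) (i : Fin n) : V n :=
  if h : i.1 + 1 < n then ee i - ee ⟨i.1 + 1, h⟩
  else
    match ct with
    | CType.B => ee i
    | CType.C => (2:ℝ) • ee i
    | CType.D => ee ⟨n - 2, Nat.sub_lt i.pos (by norm_num)⟩ + ee i

/-- The subsystem `Φ_I` generated by the simple roots indexed by `I`. -/
def PhiI (n : ℕ) (ct : CType) (I : Finset (Fin n)) : Set (V n) :=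
  Phi n ct ∩ (Submodule.span ℝ (alphaR n ct '' (I : Set (Fin n))) : Set (V n))

/-- `λ` is `Φ_I`-regular. -/
def RegI (n : ℕ) (ct : CType) (I : Finset (Fin n)) (lam : V n) : Prop :=
  ∀ β ∈ PhiI n ct I, inn lam β ≠ 0

/-- `λ` is integral. -/
def IntegralW (n : ℕ) (ct : CType) (lam : V n) : Prop :=
  ∀ β ∈ Phi n ct, ∃ k : ℤ, 2 * inn lam β / inn β β = (k : ℝ)

/-- `λ` is dominant. -/
def DominantW (n : ℕ) (ct : CType) (lam : V n) : Prop :=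
  ∀ i : Fin n, 0 ≤ inn lam (alphaR n ct i)

/-- `μ` lies in the `W_I`-orbit of `λ` (`W_I` generated by the reflections `s_α`, `α ∈ I`). -/
def WIOrb (n : ℕ) (ct : CType) (I : Finset (Fin n)) : V n → V n → Prop :=
  Relation.ReflTransGen (fun x y => ∃ i ∈ I, y = sRefl (alphaR n ct i) x)

/-- `μ` lies in the `W`-orbit of `λ`. -/
def WOrb (n : ℕ) (ct : CType) : V n → V n → Prop := WIOrb n ct Finset.univ

/-- `λ ∈ Λ_I⁺`. -/
def LamIPlus (n : ℕ) (ct : CType) (I : Finset (Fin n)) (lam : V n) : Prop :=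
  IntegralW n ct lam ∧ ∀ i ∈ I, 0 < inn lam (alphaR n ct i)

/-- The sorted list `q_1 < q_2 < … < q_{m-1}` (`1`-based values) of indices of `Δ∖I`. -/
def Qlist (n : ℕ) (I : Finset (Fin n)) : List ℕ :=
  ((Finset.univ \ I).sort (· ≤ ·)).map (fun j => j.1 + 1)

/-- The number `m` of segments determined by `I`. -/
def mval (n : ℕ) (I : Finset (Fin n)) : ℕ := (Qlist n I).length + 1

/-- `q_s`, with the conventions `q_0 = 0` and `q_m = n`. -/
def qval (n : ℕ) (I : Finset (Fin n)) (s : ℕ) : ℕ :=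
  if s = 0 then 0 else if s < mval n I then (Qlist n I).getD (s - 1) 0 else n

/-- `I` is standard (automatic in types `B`, `C`). -/
def StandardI (n : ℕ) (ct : CType) (I : Finset (Fin n)) : Prop :=
  ct = CType.D → ∀ h : 2 ≤ n,
    ((⟨n - 2, by omega⟩ : Fin n) ∈ I ∨ (⟨n - 1, by omega⟩ : Fin n) ∉ I)

/-- `q_s`, corrected for nonstandard `I` (where `q_{m-1}` is replaced by `n`,
so that the `(m-1)`-st segment is `(q_{m-2}, n]` and the `m`-th segment is empty). -/
def qv (n : ℕ) (ct : CType) (I : Finset (Fin n)) (s : ℕ) : ℕ :=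
  if ¬ StandardI n ct I ∧ s = mval n I - 1 then n else qval n I s

/-- The segment length `n_s`. -/
def nsval (n : ℕ) (ct : CType) (I : Finset (Fin n)) (s : ℕ) : ℕ :=
  qv n ct I s - qv n ct I (s - 1)

/-- The (`0`-based) index `i` lies in the `s`-th segment, i.e. `q_{s-1} < i+1 ≤ q_s`. -/
def InSeg (n : ℕ) (ct : CType) (I : Finset (Fin n)) (s : ℕ) (i : Fin n) : Prop :=
  qv n ct I (s - 1) < i.1 + 1 ∧ i.1 + 1 ≤ qv n ct I s

/-- `n_s^λ(a)`: the number of entries of the `s`-th segment of `λ` with absolute value `a`. -/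
def nsl (n : ℕ) (ct : CType) (I : Finset (Fin n)) (lam : V n) (s : ℕ) (a : ℝ) : ℕ :=
  (Finset.univ.filter (fun i : Fin n => InSeg n ct I s i ∧ |lam i| = a)).card

/-- `a_t = λ̄_{q̄_t}` for `1 ≤ t < m̄`, and `a_{m̄} = 0`. -/
def aval (n : ℕ) (ct : CType) (J : Finset (Fin n)) (lbar : V n) (t : ℕ) : ℝ :=
  if t < mval n J then
    (if h : qv n ct J t - 1 < n then lbar ⟨qv n ct J t - 1, h⟩ else 0)
  else 0

/-- `n_s^λ(a)` is maximal among all `Φ_I`-regular weights in the orbit of `λ`. -/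
def IsMaxN (n : ℕ) (ct : CType) (I : Finset (Fin n)) (lam : V n) (s : ℕ) (a : ℝ) : Prop :=
  ∀ mu : V n, WOrb n ct lam mu → RegI n ct I mu →
    nsl n ct I mu s a ≤ nsl n ct I lam s a

/-- The exceptional configurations of Proposition 4.7 (types `B` and `C`, with
`shortR i` the short/long root `e_i` resp. `2e_i`). -/
def ExcBC (n : ℕ) (ct : CType) (I : Finset (Fin n)) (shortR : Fin n → V n)
    (lam β : V n) : Prop :=
  ∃ s : ℕ, 1 ≤ s ∧ s < mval n I ∧ ∃ a : ℝ, 0 < a ∧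
    nsl n ct I lam s a = 1 ∧
    nsl n ct I lam s 0 + nsl n ct I lam (mval n I) a = 1 ∧
    ((∃ i j : Fin n, InSeg n ct I s i ∧ InSeg n ct I s j ∧
        |lam i| = a ∧ lam j = 0 ∧ (β = shortR i ∨ β = ee i + ee j)) ∨
     (∃ i j : Fin n, InSeg n ct I s i ∧ InSeg n ct I (mval n I) j ∧
        ((lam i = a ∧ lam j = a) ∨ (lam i = -a ∧ lam j = -a)) ∧
        (β = shortR i ∨ β = ee i + ee j)) ∨
     (∃ i j : Fin n, InSeg n ct I s i ∧ InSeg n ct I (mval n I) j ∧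
        ((lam i = a ∧ lam j = -a) ∨ (lam i = -a ∧ lam j = a)) ∧
        (β = shortR i ∨ β = ee i - ee j)))

/-- The exceptional configurations of Proposition 4.7 (type `D`). -/
def ExcD (n : ℕ) (I : Finset (Fin n)) (lam β : V n) : Prop :=
  ∃ s : ℕ, 1 ≤ s ∧ s < mval n I ∧ ∃ a : ℝ, 0 < a ∧
    nsl n CType.D I lam s a = 1 ∧ nsl n CType.D I lam (mval n I) a = 1 ∧
    nsl n CType.D I lam s 0 = 1 ∧ nsl n CType.D I lam (mval n I) 0 = 1 ∧
    ∃ i j k l : Fin n, InSeg n CType.D I s i ∧ InSeg n CType.D I s j ∧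
      InSeg n CType.D I (mval n I) k ∧ InSeg n CType.D I (mval n I) l ∧
      lam j = 0 ∧ lam l = 0 ∧
      ((((lam i = a ∧ lam k = a) ∨ (lam i = -a ∧ lam k = -a)) ∧
          (β = ee i + ee j ∨ β = ee i + ee k)) ∨
       (((lam i = a ∧ lam k = -a) ∨ (lam i = -a ∧ lam k = a)) ∧
          (β = ee i + ee j ∨ β = ee i - ee k)))

/-- The exceptional configurations in which `β` fails to be a linked root. -/
def Exc (n : ℕ) (ct : CType) (I : Finset (Fin n)) (lam β : V n) : Prop :=
  match ct with
  | CType.B => ExcBC n CType.B I (fun i => ee i) lam β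
  | CType.C => ExcBC n CType.C I (fun i => (2:ℝ) • ee i) lam β
  | CType.D => ExcD n I lam β

/-- `β` is a linked root of the `Φ_I`-regular weight `λ` (for standard `I`). -/
def PlainLinked (n : ℕ) (ct : CType) (I : Finset (Fin n)) (lam β : V n) : Prop :=
  RegI n ct I lam ∧ β ∈ PhiPos n ct ∧ β ∉ PhiI n ct I ∧
  RegI n ct I (sRefl β lam) ∧ sRefl β lam ≠ lam ∧ ¬ Exc n ct I lam β

/-- The transposition of the last two indices. -/
def swapLast (n : ℕ) (j : Fin n) : Fin n :=
  if j.1 = n - 1 then ⟨n - 2, Nat.sub_lt j.pos (by norm_num)⟩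
  else if j.1 = n - 2 then ⟨n - 1, Nat.sub_lt j.pos (by norm_num)⟩
  else j

/-- The isomorphism `φ = s_{e_n}` (negating the last coordinate). -/
def phiW {n : ℕ} (x : V n) : V n := fun j => if j.1 = n - 1 then -x j else x j

/-- The image `φ(I)` of an index set under `φ` (interchanging `α_{n-1}` and `α_n`). -/
def phiIdx (n : ℕ) (I : Finset (Fin n)) : Finset (Fin n) := I.image (swapLast n)

/-- `β` is a linked root of `λ`; for nonstandard `I` the notion is transported along `φ`. -/
def LinkedRoot (n : ℕ) (ct : CType) (I : Finset (Fin n)) (lam β : V n) : Prop :=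
  if StandardI n ct I then PlainLinked n ct I lam β
  else PlainLinked n ct (phiIdx n I) (phiW lam) (phiW β)

/-- One step in a connecting chain: `y ∈ W_I x`, or `y = w s_β x` for a linked root `β` of `x`. -/
def ConnStep (n : ℕ) (ct : CType) (I : Finset (Fin n)) (x y : V n) : Prop :=
  RegI n ct I x ∧ RegI n ct I y ∧
  (WIOrb n ct I x y ∨ ∃ β : V n, LinkedRoot n ct I x β ∧ WIOrb n ct I (sRefl β x) y)

/-- `λ ⟷ μ`: `λ` and `μ` are connected by a chain of linked roots. -/
def Conn (n : ℕ) (ct : CType) (I : Finset (Fin n)) (lam mu : V n) : Prop :=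
  RegI n ct I lam ∧ RegI n ct I mu ∧
  Relation.ReflTransGen (ConnStep n ct I) lam mu

/-- The set `^IW^Jλ̄ = Wλ̄ ∩ Λ_I⁺` of weights parametrizing the simple modules. -/
def IWJset (n : ℕ) (ct : CType) (I : Finset (Fin n)) (lbar : V n) : Set (V n) :=
  {mu | WOrb n ct lbar mu ∧ LamIPlus n ct I mu}

/-- `(S, S̄)` is a separable pair for the weight `λ`. -/
def IsSepPair (n : ℕ) (ct : CType) (I J : Finset (Fin n)) (lbar lam : V n)
    (S Sb : Finset ℕ) : Prop :=
  S.Nonempty ∧ Sb.Nonempty ∧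
  S ⊆ Finset.Icc 1 (mval n I) ∧ Sb ⊆ Finset.Icc 1 (mval n J) ∧
  1 < mval n I ∧ 1 < mval n J ∧
  (∀ s ∈ S, ∀ t ∈ Sb, IsMaxN n ct I lam s (aval n ct J lbar t)) ∧
  (∀ s ∈ Finset.Icc 1 (mval n I), s ∉ S →
     ∀ t ∈ Finset.Icc 1 (mval n J), t ∉ Sb →
       nsl n ct I lam s (aval n ct J lbar t) = 0) ∧
  (match ct with
   | CType.B => (mval n I ∈ S ↔ mval n J ∉ Sb)
   | CType.C => (mval n I ∈ S ↔ mval n J ∉ Sb)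
   | CType.D => (mval n I ∈ S ↔ mval n J ∈ Sb))

/-- `𝒟`: the set of separable pairs of the system `(Φ, Φ_I, Φ_J)`. -/
def DSet (n : ℕ) (ct : CType) (I J : Finset (Fin n)) (lbar : V n) :
    Set (Finset ℕ × Finset ℕ) :=
  {p | ∀ lam ∈ IWJset n ct I lbar, IsSepPair n ct I J lbar lam p.1 p.2}

/-- The four weakly separable pairs. -/
def IsWeakPair (n : ℕ) (I J : Finset (Fin n)) (p : Finset ℕ × Finset ℕ) : Prop :=
  p = (Finset.Icc 1 (mval n I - 1), {mval n J}) ∨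
  p = (Finset.Icc 1 (mval n I), {mval n J}) ∨
  p = ({mval n I}, Finset.Icc 1 (mval n J - 1)) ∨
  p = ({mval n I}, Finset.Icc 1 (mval n J))

/-- The system `(Φ, Φ_I, Φ_J)` is separable. -/
def SepSys (n : ℕ) (ct : CType) (I J : Finset (Fin n)) (lbar : V n) : Prop :=
  (DSet n ct I J lbar).Nonempty

/-- The system `(Φ, Φ_I, Φ_J)` is strongly separable. -/
def StronglySepSys (n : ℕ) (ct : CType) (I J : Finset (Fin n)) (lbar : V n) : Prop :=
  ∃ p ∈ DSet n ct I J lbar, ¬ IsWeakPair n I J p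

/-- The system `(Φ, Φ_I, Φ_J)` is weakly separable. -/
def WeaklySepSys (n : ℕ) (ct : CType) (I J : Finset (Fin n)) (lbar : V n) : Prop :=
  SepSys n ct I J lbar ∧ ∀ p ∈ DSet n ct I J lbar, IsWeakPair n I J p

/-- The partial ordering on separable pairs: `(S₁,S̄₁) ≤ (S₂,S̄₂)` iff `S₁ ⊆ S₂`, `S̄₁ ⊇ S̄₂`. -/
def pairLE (p q : Finset ℕ × Finset ℕ) : Prop := p.1 ⊆ q.1 ∧ q.2 ⊆ p.2

/-- Strict version of `pairLE`. -/
def pairLT (p q : Finset ℕ × Finset ℕ) : Prop := pairLE p q ∧ p ≠ q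

/-- The generating relations of the equivalence `∼` on `𝒟`. -/
def PairRel (D : Set (Finset ℕ × Finset ℕ)) (p q : Finset ℕ × Finset ℕ) : Prop :=
  p ∈ D ∧ q ∈ D ∧ ((p.2 = q.2 ∧ p.1 ⊆ q.1) ∨ (p.1 = q.1 ∧ p.2 ⊆ q.2))

/-- The equivalence relation `∼` on separable pairs. -/
def PairEquiv (D : Set (Finset ℕ × Finset ℕ)) :
    Finset ℕ × Finset ℕ → Finset ℕ × Finset ℕ → Prop :=
  Relation.EqvGen (PairRel D)

/-- A trivial separable pair. -/
def TrivialPair (n : ℕ) (ct : CType) (I J : Finset (Fin n)) (lbar : V n)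
    (p : Finset ℕ × Finset ℕ) : Prop :=
  match ct with
  | CType.B | CType.C =>
    (∃ s0 : ℕ, 1 ≤ s0 ∧ s0 < mval n I ∧
       PairEquiv (DSet n ct I J lbar) p ({s0}, Finset.Icc 1 (mval n J))) ∨
    (∃ t0 : ℕ, 1 ≤ t0 ∧ t0 < mval n J ∧
       PairEquiv (DSet n ct I J lbar) p (Finset.Icc 1 (mval n I), {t0}))
  | CType.D =>
    (∃ s0 : ℕ, 1 ≤ s0 ∧ s0 < mval n I ∧
       PairEquiv (DSet n ct I J lbar) p ({s0}, Finset.Icc 1 (mval n J - 1))) ∨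
    (∃ t0 : ℕ, 1 ≤ t0 ∧ t0 < mval n J ∧
       PairEquiv (DSet n ct I J lbar) p (Finset.Icc 1 (mval n I - 1), {t0}))

/-- The set of blocks: equivalence classes of `^IW^Jλ̄` under `⟷`. -/
def BlockSet (n : ℕ) (ct : CType) (I : Finset (Fin n)) (lbar : V n) : Set (Set (V n)) :=
  {Cl | ∃ lam ∈ IWJset n ct I lbar,
     Cl = {mu | mu ∈ IWJset n ct I lbar ∧ Conn n ct I lam mu}}

/-- The parity `P(λ)` of the number of negative entries of `λ`. -/
def Pfun (n : ℕ) (lam : V n) : ℕ :=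
  (Finset.univ.filter (fun i : Fin n => lam i < 0)).card % 2

/-- A fundamental chain `c 1 ∼ c 2 ∼ … ∼ c k` in `𝒟`. -/
def IsFundChain (D : Set (Finset ℕ × Finset ℕ)) (c : ℕ → Finset ℕ × Finset ℕ)
    (k : ℕ) : Prop :=
  1 ≤ k ∧ (∀ i, 1 ≤ i → i ≤ k → c i ∈ D) ∧
  (∀ i, 1 ≤ i → i < k →
     ((c i).1 = (c (i+1)).1 ∨ (c i).2 = (c (i+1)).2) ∧
     (pairLT (c i) (c (i+1)) ∨ pairLT (c (i+1)) (c i)))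

/-- The list of parts of the partition `π_I`. -/
def piParts (n : ℕ) (ct : CType) (I : Finset (Fin n)) : List ℕ :=
  (List.range (mval n I - 1)).map (fun s => nsval n ct I (s+1)) ++
  (List.range (mval n I - 1)).map (fun s => nsval n ct I (s+1)) ++
  (match ct with
   | CType.B => [2 * nsval n ct I (mval n I) + 1]
   | CType.C => [2 * nsval n ct I (mval n I)]
   | CType.D => if nsval n ct I (mval n I) = 0 then []
                else [2 * nsval n ct I (mval n I) - 1, 1])

/-- The `i`-th part (`1`-based) of the partition with list of parts `L`. -/
def partAt (L : List ℕ) (i : ℕ) : ℕ :=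
  (L.mergeSort (fun a b => decide (b ≤ a))).getD (i - 1) 0

/-- The `i`-th part (`1`-based) of the dual partition `π^t`: the number of parts `≥ i`. -/
def dualAt (L : List ℕ) (i : ℕ) : ℕ :=
  (L.filter (fun x => decide (i ≤ x))).length

/-- `k` is compatible with the system `(Φ, Φ_I, Φ_J)`. -/
def CompatibleK (n : ℕ) (ct : CType) (I J : Finset (Fin n)) (k : ℕ) : Prop :=
  1 ≤ k ∧ k ≤ 2 * mval n I - 1 ∧
  (match ct with
   | CType.B =>
     (Odd k ∧ k ≤ partAt (piParts n CType.B J) 2 ∧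
        2 * nsval n CType.B J (mval n J) + 1 ≤ k ∧
        partAt (piParts n CType.B I) k ≤ 2 * nsval n CType.B I (mval n I) + 1) ∨
     (Even k ∧ k ≤ 2 * nsval n CType.B J (mval n J) ∧
        2 * nsval n CType.B I (mval n I) + 1 ≤ partAt (piParts n CType.B I) k)
   | CType.C =>
     (Odd k ∧ k ≤ partAt (piParts n CType.C J) 2 ∧
        2 * nsval n CType.C J (mval n J) + 1 ≤ k ∧
        partAt (piParts n CType.C I) k ≤ 2 * nsval n CType.C I (mval n I)) ∨
     (Even k ∧ k ≤ 2 * nsval n CType.C J (mval n J) ∧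
        2 * nsval n CType.C I (mval n I) + 1 ≤ partAt (piParts n CType.C I) k)
   | CType.D =>
     (Even k ∧ k ≤ partAt (piParts n CType.D J) 2 ∧
        2 * nsval n CType.D J (mval n J) ≤ k ∧
        2 * nsval n CType.D I (mval n I) ≤ partAt (piParts n CType.D I) k) ∨
     (Odd k ∧ k ≤ 2 * nsval n CType.D J (mval n J) - 1 ∧
        partAt (piParts n CType.D I) k ≤ 2 * nsval n CType.D I (mval n I) - 1))

/-- `s_{e_{k_1}}^{ε_1} ⋯ s_{e_{k_r}}^{ε_r} μ`. -/
def applyFlips (n : ℕ) (ks : ℕ → Fin n) (eps : ℕ → Bool) : ℕ → V n → V n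
  | 0, v => v
  | (r+1), v =>
      if eps (r+1) then sRefl (ee (ks (r+1))) (applyFlips n ks eps r v)
      else applyFlips n ks eps r v

end

/-!
If `x q = 0` then `s_{e_p} x = s_{e_p + e_q} s_{e_p - e_q} x`, so a zero entry allows a sign change
to be carried out by two reflections; the point is to keep the intermediate weight regular and to
avoid exceptional roots. A root supported on entries of two different segments, one of which is
zero, is never exceptional. Hence if the zero entry lies in segment `t ≠ s`, one exchanges it with
`λ_i` and then exchanges back with the opposite sign. The intermediate weight is regular when the
sign given to `λ_i` differs from that of the entry `±a` of segment `t`, if there is one.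

If the zero entry `λ_j` lies in segment `s`, segment `t` has an entry `λ_k = ±a`. Moving `λ_k` into
position `j` and then the new zero at `k` to position `i` yields, after the transposition of `i` and
`j` in `W_I`, the weight `s_{e_i} λ`.

The last segment needs separate care. In types `B` and `C` it has no zero entries, `W_I` changes all
signs in it, and if it is segment `t`, then `n_s(0) + n_t(a) = 2` keeps `e_i + e_j` from being
exceptional. In type `D`, `W_I` changes two signs at a time in it.
-/

variable {n : ℕ}

section Reflections

theorem inn_eq_dotProduct (x y : V n) : inn x y = x ⬝ᵥ y := rfl

theorem inn_ee (x : V n) (p : Fin n) : inn x (ee p) = x p := dotProduct_single_one x p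

theorem ee_apply (p r : Fin n) : (ee p : V n) r = if r = p then 1 else 0 := by
  simp only [ee, Pi.single_apply]

theorem inn_self_ne_zero {v : V n} (hv : v ≠ 0) : inn v v ≠ 0 :=
  dotProduct_self_eq_zero.not.2 hv

theorem inn_sRefl_left (v x y : V n) : inn (sRefl v x) y = inn x (sRefl v y) := by
  simp only [inn_eq_dotProduct, sRefl, sub_dotProduct, dotProduct_sub, smul_dotProduct,
    dotProduct_smul, smul_eq_mul, dotProduct_comm v y]
  ring

theorem sRefl_sub_smul (v x y : V n) (k : ℝ) :
    sRefl v (x - k • y) = sRefl v x - k • sRefl v y := by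
  simp only [sRefl, inn_eq_dotProduct, sub_dotProduct, smul_dotProduct, smul_eq_mul]
  module

theorem sRefl_zero (x : V n) : sRefl 0 x = x := by
  simp only [sRefl, smul_zero, sub_zero]

theorem sRefl_self {v : V n} (hv : v ≠ 0) : sRefl v v = -v := by
  rw [sRefl, mul_div_cancel_right₀ _ (inn_self_ne_zero hv)]
  module

theorem sRefl_involutive (v : V n) : Function.Involutive (sRefl v) := by
  intro x
  obtain rfl | hv := eq_or_ne v 0
  · simp only [sRefl_zero]
  · rw [show sRefl v x = x - (2 * inn x v / inn v v) • v from rfl, sRefl_sub_smul, sRefl_self hv,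
      sRefl]
    module

theorem sRefl_smul {k : ℝ} (hk : k ≠ 0) (v x : V n) : sRefl (k • v) x = sRefl v x := by
  simp only [sRefl, inn_eq_dotProduct, smul_dotProduct, dotProduct_smul, smul_eq_mul, smul_smul]
  congr 2
  field_simp

theorem sRefl_sRefl (v w x : V n) : sRefl (sRefl v w) x = sRefl v (sRefl w (sRefl v x)) := by
  rw [show sRefl w (sRefl v x) = sRefl v x - (2 * inn (sRefl v x) w / inn w w) • w from rfl,
    sRefl_sub_smul, sRefl_involutive v x, inn_sRefl_left, sRefl, inn_sRefl_left v w,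
    sRefl_involutive v w]

theorem sRefl_ee (p : Fin n) (x : V n) : sRefl (ee p) x = Function.update x p (-x p) := by
  ext r
  simp only [sRefl, inn_ee, ee_apply, if_true, Pi.sub_apply, Pi.smul_apply, smul_eq_mul,
    Function.update_apply]
  split_ifs with h
  · subst h; ring
  · ring

/-- The vector `e_p - c e_q`. For `c = 1` and `c = -1` this is the root `e_p - e_q`, respectively
`e_p + e_q`; the parameter allows the two to be treated together. -/
noncomputable def pairRoot (c : ℝ) (p q : Fin n) : V n := ee p - c • ee q

theorem pairRoot_apply (c : ℝ) (p q r : Fin n) :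
    pairRoot c p q r = (if r = p then 1 else 0) - c * (if r = q then 1 else 0) := by
  simp only [pairRoot, Pi.sub_apply, Pi.smul_apply, ee_apply, smul_eq_mul]

theorem pairRoot_one (p q : Fin n) : pairRoot 1 p q = ee p - ee q := by
  rw [pairRoot, one_smul]

theorem pairRoot_neg_one (p q : Fin n) : pairRoot (-1) p q = ee p + ee q := by
  rw [pairRoot, neg_one_smul, sub_neg_eq_add]

theorem pairRoot_swap {c : ℝ} (hc : c * c = 1) (p q : Fin n) :
    pairRoot c p q = (-c) • pairRoot c q p := by
  simp only [pairRoot, smul_sub, smul_smul, neg_mul, hc]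
  module

theorem inn_pairRoot (x : V n) (c : ℝ) (p q : Fin n) : inn x (pairRoot c p q) = x p - c * x q := by
  rw [pairRoot, inn_eq_dotProduct, dotProduct_sub, dotProduct_smul, ← inn_eq_dotProduct,
    ← inn_eq_dotProduct, inn_ee, inn_ee, smul_eq_mul]

theorem sRefl_pairRoot_apply {c : ℝ} (hc : c * c = 1) {p q : Fin n} (hpq : p ≠ q) (x : V n)
    (r : Fin n) :
    sRefl (pairRoot c p q) x r = if r = p then c * x q else if r = q then c * x p else x r := by
  have hnorm : inn (pairRoot c p q) (pairRoot c p q) = 2 := by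
    rw [inn_pairRoot, pairRoot_apply, pairRoot_apply]
    simp only [hpq, hpq.symm, if_true, if_false]
    linear_combination hc
  simp only [sRefl, hnorm, inn_pairRoot, Pi.sub_apply, Pi.smul_apply, pairRoot_apply, smul_eq_mul]
  split_ifs with hp hq
  · exact absurd (hp.symm.trans hq) hpq
  · subst hp; ring
  · subst r; linear_combination (-x q) * hc
  · ring

theorem sRefl_pairRoot_swap {c : ℝ} (hc : c * c = 1) (p q : Fin n) (x : V n) :
    sRefl (pairRoot c p q) x = sRefl (pairRoot c q p) x := by
  rw [pairRoot_swap hc, sRefl_smul (neg_ne_zero.2 (left_ne_zero_of_mul_eq_one hc))]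

theorem sRefl_ee_eq_sRefl_pairRoot {c : ℝ} (hc : c * c = 1) {p q : Fin n} (hpq : p ≠ q) {x : V n}
    (hq : x q = 0) :
    sRefl (ee p) x = sRefl (pairRoot (-c) p q) (sRefl (pairRoot c p q) x) := by
  have hc' : -c * -c = 1 := by rw [neg_mul_neg, hc]
  ext r
  rw [sRefl_ee, Function.update_apply]
  simp only [sRefl_pairRoot_apply hc hpq, sRefl_pairRoot_apply hc' hpq, hpq.symm, if_true, if_false,
    hq, mul_zero]
  split_ifs with hp hrq
  · linear_combination x p * hc
  · rw [hrq, hq]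
  · rfl

end Reflections

section Segments

/-- The index, counted from `1`, of the segment determined by `I` which contains the position `p`.
Segments end exactly at the positions outside `I`. -/
noncomputable def segment (I : Finset (Fin n)) (p : Fin n) : ℕ := (Finset.Iio p \ I).card + 1

variable {ct : CType} {I : Finset (Fin n)}

theorem mval_eq_card_compl_add_one (I : Finset (Fin n)) : mval n I = Iᶜ.card + 1 := by
  rw [mval, Qlist, List.length_map, Finset.length_sort, Finset.compl_eq_univ_sdiff]

theorem segment_le_mval (I : Finset (Fin n)) (p : Fin n) : segment I p ≤ mval n I := by
  rw [mval_eq_card_compl_add_one, segment, Finset.compl_eq_univ_sdiff]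
  gcongr
  exact Finset.subset_univ _

theorem segment_eq_iff {p q : Fin n} (hpq : p ≤ q) :
    segment I p = segment I q ↔ ∀ r, p ≤ r → r < q → r ∈ I := by
  have hsub : Finset.Iio p \ I ⊆ Finset.Iio q \ I :=
    Finset.sdiff_subset_sdiff (Finset.Iio_subset_Iio hpq) subset_rfl
  rw [segment, segment, Nat.add_right_cancel_iff]
  constructor
  · intro h r hpr hrq
    by_contra hr
    have hmem : r ∈ Finset.Iio p \ I := by
      rw [Finset.eq_of_subset_of_card_le hsub h.ge]
      exact Finset.mem_sdiff.2 ⟨Finset.mem_Iio.2 hrq, hr⟩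
    exact (Finset.mem_Iio.1 (Finset.mem_sdiff.1 hmem).1).not_ge hpr
  · intro h
    congr 1
    refine hsub.antisymm fun r hr => ?_
    simp only [Finset.mem_sdiff, Finset.mem_Iio] at hr ⊢
    exact ⟨not_le.1 fun hpr => hr.2 (h r hpr hr.1), hr.2⟩

theorem segment_eq_mval_iff {p : Fin n} : segment I p = mval n I ↔ ∀ r, p ≤ r → r ∈ I := by
  have hsub : Finset.Iio p \ I ⊆ Iᶜ := fun r hr => Finset.mem_compl.2 (Finset.mem_sdiff.1 hr).2
  rw [segment, mval_eq_card_compl_add_one, Nat.add_right_cancel_iff]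
  constructor
  · intro h r hpr
    by_contra hr
    have hmem : r ∈ Finset.Iio p \ I := by
      rw [Finset.eq_of_subset_of_card_le hsub h.ge]
      exact Finset.mem_compl.2 hr
    exact (Finset.mem_Iio.1 (Finset.mem_sdiff.1 hmem).1).not_ge hpr
  · intro h
    congr 1
    refine hsub.antisymm fun r hr => ?_
    rw [Finset.mem_compl] at hr
    exact Finset.mem_sdiff.2 ⟨Finset.mem_Iio.2 (not_le.1 fun hpr => hr (h r hpr)), hr⟩

theorem getElem_lt_iff_lt_countP {l : List ℕ} (hl : l.Pairwise (· < ·)) {k : ℕ}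
    (hk : k < l.length) (N : ℕ) : l[k] < N ↔ k < l.countP (· < N) := by
  induction l generalizing k with
  | nil => simp at hk
  | cons x l ih =>
    rw [List.pairwise_cons] at hl
    by_cases hx : x < N
    · rw [List.countP_cons_of_pos (by simpa using hx)]
      cases k with
      | zero => simpa using hx
      | succ k => simpa using ih hl.2 (by simpa using hk)
    · have hl_ge : ∀ y ∈ x :: l, ¬ y < N := by
        simp only [List.mem_cons, forall_eq_or_imp]
        exact ⟨hx, fun y hy hyN => hx ((hl.1 y hy).trans hyN)⟩
      have hcount : (x :: l).countP (· < N) = 0 :=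
        List.countP_eq_zero.2 fun y hy => by simpa using hl_ge y hy
      simpa [hcount] using hl_ge _ (List.getElem_mem hk)

theorem Qlist_pairwise_lt (I : Finset (Fin n)) : (Qlist n I).Pairwise (· < ·) := by
  rw [Qlist, List.pairwise_map]
  exact (Finset.sortedLT_sort _).pairwise.imp fun {a b} (hab : a.1 < b.1) => by omega

theorem Qlist_countP (I : Finset (Fin n)) (p : Fin n) :
    (Qlist n I).countP (· < p.1 + 1) + 1 = segment I p := by
  rw [Qlist, segment, List.countP_map, Function.comp_def, ← Multiset.coe_countP, Finset.sort_eq,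
    Multiset.countP_eq_card_filter, ← Finset.filter_val, Finset.card_val]
  congr 2
  ext r
  simp [and_comm]

theorem qval_lt_iff (I : Finset (Fin n)) (s : ℕ) (p : Fin n) :
    qval n I s < p.1 + 1 ↔ s < segment I p := by
  have hle := segment_le_mval I p
  rw [qval]
  split_ifs with h0 hs
  · simp [h0, segment]
  · have hk : s - 1 < (Qlist n I).length := by rw [mval] at hs; omega
    rw [List.getD_eq_getElem _ _ hk, getElem_lt_iff_lt_countP (Qlist_pairwise_lt I) hk,
      ← Qlist_countP]
    omega
  · omega

theorem inSeg_iff (hstd : StandardI n ct I) {s : ℕ} {p : Fin n} :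
    InSeg n ct I s p ↔ segment I p = s := by
  have hqv : ∀ s, qv n ct I s = qval n I s := fun s => if_neg fun h => h.1 hstd
  have hpos : 0 < segment I p := Nat.succ_pos _
  rw [InSeg, hqv, hqv, qval_lt_iff]
  have hlt := qval_lt_iff I s p
  omega

theorem nsl_eq_zero_iff (hstd : StandardI n ct I) {x : V n} {s : ℕ} {a : ℝ} :
    nsl n ct I x s a = 0 ↔ ∀ p, segment I p = s → |x p| ≠ a := by
  simp only [nsl, Finset.card_eq_zero, Finset.filter_eq_empty_iff, Finset.mem_univ, inSeg_iff hstd,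
    true_implies, not_and, ne_eq]

theorem nsl_pos_iff (hstd : StandardI n ct I) {x : V n} {s : ℕ} {a : ℝ} :
    0 < nsl n ct I x s a ↔ ∃ p, segment I p = s ∧ |x p| = a := by
  simp only [nsl, Finset.card_pos, Finset.filter_nonempty_iff, Finset.mem_univ, inSeg_iff hstd,
    true_and]

theorem nsl_le_one_iff (hstd : StandardI n ct I) {x : V n} {s : ℕ} {a : ℝ} :
    nsl n ct I x s a ≤ 1 ↔
      ∀ p, segment I p = s → |x p| = a → ∀ q, segment I q = s → |x q| = a → p = q := by
  simp only [nsl, Finset.card_le_one, Finset.mem_filter, Finset.mem_univ, inSeg_iff hstd, true_and,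
    and_imp]

end Segments

section GeneratedRoots

variable {ct : CType} {I : Finset (Fin n)}

theorem alphaR_cases (ct : CType) (i : Fin n) :
    (∃ j : Fin n, j.1 = i.1 + 1 ∧ alphaR n ct i = pairRoot 1 i j) ∨
      i.1 + 1 = n ∧ (ct ≠ CType.D ∧ (∃ k : ℝ, k ≠ 0 ∧ alphaR n ct i = k • ee i) ∨
        ct = CType.D ∧ ∃ j : Fin n, j.1 = n - 2 ∧ alphaR n ct i = pairRoot (-1) j i) := by
  by_cases h : i.1 + 1 < n
  · exact .inl ⟨⟨i.1 + 1, h⟩, rfl, by rw [alphaR.eq_def, dif_pos h, pairRoot_one]⟩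
  · refine .inr ⟨by omega, ?_⟩
    rw [alphaR.eq_def, dif_neg h]
    cases ct with
    | B => exact .inl ⟨nofun, 1, one_ne_zero, (one_smul ℝ _).symm⟩
    | C => exact .inl ⟨nofun, 2, two_ne_zero, rfl⟩
    | D => exact .inr ⟨rfl, ⟨n - 2, by omega⟩, rfl, (pairRoot_neg_one _ _).symm⟩

/-- The nonzero multiples of the roots of `Φ_I`, described as the vectors obtained from the simple
roots in `I` by scaling and by reflecting one of them in another. Multiples are included so that the
long and short roots `2e_p` and `e_p` need not be distinguished. -/
inductive GenRoot (ct : CType) (I : Finset (Fin n)) : V n → Prop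
  | simple {i : Fin n} (hi : i ∈ I) : GenRoot ct I (alphaR n ct i)
  | smul {k : ℝ} (hk : k ≠ 0) {v : V n} (hv : GenRoot ct I v) : GenRoot ct I (k • v)
  | reflect {v w : V n} (hv : GenRoot ct I v) (hw : GenRoot ct I w) : GenRoot ct I (sRefl v w)

theorem GenRoot.mem_span {v : V n} (hv : GenRoot ct I v) :
    v ∈ Submodule.span ℝ (alphaR n ct '' (I : Set (Fin n))) := by
  induction hv with
  | simple hi => exact Submodule.subset_span (Set.mem_image_of_mem _ hi)
  | smul _ _ ih => exact Submodule.smul_mem _ _ ih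
  | reflect _ _ ihv ihw => exact Submodule.sub_mem _ ihw (Submodule.smul_mem _ _ ihv)

theorem GenRoot.wIOrb {v : V n} (hv : GenRoot ct I v) (x : V n) :
    WIOrb n ct I x (sRefl v x) := by
  induction hv generalizing x with
  | simple hi => exact .single ⟨_, hi, rfl⟩
  | smul hk _ ih => rw [sRefl_smul hk]; exact ih x
  | reflect _ _ ihv ihw =>
    rw [sRefl_sRefl]
    exact ((ihv x).trans (ihw _)).trans (ihv _)

theorem sRefl_pairRoot_one_pairRoot (c : ℝ) {p q r : Fin n} (hpq : p ≠ q) (hpr : p ≠ r)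
    (hqr : q ≠ r) : sRefl (pairRoot 1 p q) (pairRoot c q r) = pairRoot c p r := by
  ext k
  simp only [sRefl_pairRoot_apply (one_mul 1) hpq, pairRoot_apply]
  grind

theorem sRefl_pairRoot_one_ee {p q : Fin n} (hpq : p ≠ q) :
    sRefl (pairRoot 1 p q) (ee q) = ee p := by
  ext k
  simp only [sRefl_pairRoot_apply (one_mul 1) hpq, ee_apply]
  grind

theorem sRefl_ee_pairRoot_one {p q : Fin n} (hpq : p ≠ q) :
    sRefl (ee q) (pairRoot 1 p q) = pairRoot (-1) p q := by
  ext k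
  simp only [sRefl_ee, Function.update_apply, pairRoot_apply]
  grind

theorem GenRoot.pairRoot_one_of_lt {p q : Fin n} (hpq : p < q)
    (hI : ∀ r, p ≤ r → r < q → r ∈ I) : GenRoot ct I (pairRoot 1 p q) := by
  obtain ⟨d, hd⟩ := Nat.exists_eq_add_of_lt (Fin.lt_def.1 hpq)
  induction d generalizing q with
  | zero =>
    have hp := hI p le_rfl hpq
    obtain ⟨j, hj, hα⟩ | ⟨hp', -⟩ := alphaR_cases ct p
    · obtain rfl : j = q := Fin.ext (by omega)
      exact hα ▸ .simple hp
    · omega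
  | succ d ih =>
    obtain ⟨r, hr⟩ : ∃ r : Fin n, r.1 = p.1 + d + 1 := ⟨⟨p.1 + d + 1, by omega⟩, rfl⟩
    have hpr : p < r := Fin.lt_def.2 (by omega)
    have hrq : r < q := Fin.lt_def.2 (by omega)
    have hp : GenRoot ct I (pairRoot 1 p r) := ih hpr (fun k h h' => hI k h (h'.trans hrq)) hr
    have hr' : GenRoot ct I (pairRoot 1 r q) := by
      obtain ⟨j, hj, hα⟩ | ⟨hr', -⟩ := alphaR_cases ct r
      · obtain rfl : j = q := Fin.ext (by omega)
        exact hα ▸ .simple (hI r hpr.le hrq)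
      · omega
    rw [← sRefl_pairRoot_one_pairRoot 1 hpr.ne hpq.ne hrq.ne]
    exact hp.reflect hr'

theorem GenRoot.pairRoot_symm {c : ℝ} (hc : c * c = 1) {p q : Fin n}
    (h : GenRoot ct I (pairRoot c p q)) : GenRoot ct I (pairRoot c q p) := by
  rw [pairRoot_swap hc]
  exact h.smul (neg_ne_zero.2 (left_ne_zero_of_mul_eq_one hc))

theorem GenRoot.pairRoot_one {p q : Fin n} (hpq : p ≠ q) (hseg : segment I p = segment I q) :
    GenRoot ct I (pairRoot 1 p q) := by
  obtain h | h := hpq.lt_or_gt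
  · exact .pairRoot_one_of_lt h ((segment_eq_iff h.le).1 hseg)
  · exact (pairRoot_one_of_lt h ((segment_eq_iff h.le).1 hseg.symm)).pairRoot_symm (one_mul 1)

theorem GenRoot.pairRoot_transport {c : ℝ} {p q r : Fin n} (h : GenRoot ct I (pairRoot c q r))
    (hseg : segment I p = segment I q) (hpr : p ≠ r) (hqr : q ≠ r) :
    GenRoot ct I (pairRoot c p r) := by
  obtain rfl | hpq := eq_or_ne p q
  · exact h
  · rw [← sRefl_pairRoot_one_pairRoot c hpq hpr hqr]
    exact (pairRoot_one hpq hseg).reflect h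

theorem exists_last (p : Fin n) : ∃ u : Fin n, u.1 + 1 = n ∧ p ≤ u := by
  have hp := p.2
  exact ⟨⟨n - 1, by omega⟩, Nat.sub_add_cancel (by omega), Fin.le_def.2 (Nat.le_sub_one_of_lt hp)⟩

theorem segment_eq_mval_of_le {p q : Fin n} (hp : segment I p = mval n I) (hpq : p ≤ q) :
    segment I q = mval n I :=
  segment_eq_mval_iff.2 fun r hr => segment_eq_mval_iff.1 hp r (hpq.trans hr)

theorem GenRoot.ee (hct : ct ≠ CType.D) {p : Fin n} (hp : segment I p = mval n I) :
    GenRoot ct I (ee p) := by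
  obtain ⟨u, hu, hpu⟩ := exists_last p
  have hu_gen : GenRoot ct I (JantzenBlocks.ee u) := by
    obtain ⟨j, hj, -⟩ | ⟨-, ⟨-, k, hk, hα⟩ | ⟨hD, -⟩⟩ := alphaR_cases ct u
    · omega
    · rw [← inv_smul_smul₀ hk (JantzenBlocks.ee u), ← hα]
      exact (simple (segment_eq_mval_iff.1 hp u hpu)).smul (inv_ne_zero hk)
    · exact absurd hD hct
  obtain rfl | hne := eq_or_ne p u
  · exact hu_gen
  · rw [← sRefl_pairRoot_one_ee hne]
    exact (pairRoot_one hne (hp.trans (segment_eq_mval_of_le hp hpu).symm)).reflect hu_gen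

theorem GenRoot.pairRoot_neg_one_typeD {p q : Fin n} (hpq : p < q)
    (hp : segment I p = mval n I) : GenRoot CType.D I (pairRoot (-1) p q) := by
  obtain ⟨u, hu, hqu⟩ := exists_last q
  have hpu : p < u := hpq.trans_le hqu
  obtain ⟨j, hj, -⟩ | ⟨-, ⟨hD, -⟩ | ⟨-, w, hw, hα⟩⟩ := alphaR_cases CType.D u
  · omega
  · exact absurd rfl hD
  have hpw : p ≤ w := Fin.le_def.2 (by have := Fin.lt_def.1 hpu; omega)
  have hwu : w ≠ u := Fin.ne_of_val_ne (by omega)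
  have hwu_gen : GenRoot CType.D I (pairRoot (-1) w u) :=
    hα ▸ simple (segment_eq_mval_iff.1 hp u hpu.le)
  have hpu_gen : GenRoot CType.D I (pairRoot (-1) p u) :=
    hwu_gen.pairRoot_transport (hp.trans (segment_eq_mval_of_le hp hpw).symm) hpu.ne hwu
  have hc : (-1 : ℝ) * -1 = 1 := by norm_num
  refine ((hpu_gen.pairRoot_symm hc).pairRoot_transport ?_ hpq.ne' hpu.ne').pairRoot_symm hc
  rw [segment_eq_mval_of_le hp hpq.le, segment_eq_mval_of_le hp hpu.le]

theorem GenRoot.pairRoot_neg_one {p q : Fin n} (hpq : p ≠ q) (hp : segment I p = mval n I)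
    (hq : segment I q = mval n I) : GenRoot ct I (pairRoot (-1) p q) := by
  by_cases hct : ct = CType.D
  · subst hct
    obtain h | h := hpq.lt_or_gt
    · exact pairRoot_neg_one_typeD h hp
    · exact (pairRoot_neg_one_typeD h hq).pairRoot_symm (by norm_num)
  · rw [← sRefl_ee_pairRoot_one hpq]
    exact (GenRoot.ee hct hq).reflect (pairRoot_one hpq (hp.trans hq.symm))

theorem GenRoot.pairRoot {c : ℝ} (hc : c * c = 1) {p q : Fin n} (hpq : p ≠ q)
    (hseg : segment I p = segment I q) (hlast : c ≠ 1 → segment I p = mval n I) :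
    GenRoot ct I (pairRoot c p q) := by
  obtain rfl | rfl := mul_self_eq_one_iff.1 hc
  · exact pairRoot_one hpq hseg
  · have hp := hlast (by norm_num)
    exact pairRoot_neg_one hpq hp (hseg ▸ hp)

end GeneratedRoots

section SpanOfSimpleRoots

variable {ct : CType} {I : Finset (Fin n)}

/-- The functional `x ↦ x_1 + ⋯ + x_r`. For `r` outside a standard `I` it vanishes on `Φ_I`, so it
separates the segments. -/
noncomputable def partialSum (r : Fin n) : V n →ₗ[ℝ] ℝ := ∑ k ∈ Finset.Iic r, LinearMap.proj k

theorem partialSum_ee (r p : Fin n) : partialSum r (ee p) = if p ≤ r then (1 : ℝ) else 0 := by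
  simp [partialSum, ee, Pi.single_apply]

theorem partialSum_pairRoot (c : ℝ) (r p q : Fin n) :
    partialSum r (pairRoot c p q) =
      (if p ≤ r then (1 : ℝ) else 0) - c * if q ≤ r then 1 else 0 := by
  rw [pairRoot, map_sub, map_smul, partialSum_ee, partialSum_ee, smul_eq_mul]

theorem penultimate_mem_of_standardI (hstd : StandardI n CType.D I) {i j : Fin n} (hi : i ∈ I)
    (hin : i.1 + 1 = n) (hjn : j.1 = n - 2) : j ∈ I := by
  obtain rfl | hji := eq_or_ne j i
  · exact hi
  have hn : 2 ≤ n := by have := Fin.val_ne_of_ne hji; omega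
  have hi_eq : i = ⟨n - 1, by omega⟩ := Fin.ext (Nat.eq_sub_of_add_eq hin)
  rw [show j = ⟨n - 2, by omega⟩ from Fin.ext hjn]
  exact (hstd rfl hn).resolve_right (not_not.2 (hi_eq ▸ hi))

theorem partialSum_eq_zero (hstd : StandardI n ct I) {r : Fin n} (hr : r ∉ I) {v : V n}
    (hv : v ∈ Submodule.span ℝ (alphaR n ct '' (I : Set (Fin n)))) : partialSum r v = 0 := by
  suffices h : Submodule.span ℝ (alphaR n ct '' (I : Set (Fin n))) ≤ LinearMap.ker (partialSum r)
    from h hv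
  rw [Submodule.span_le]
  rintro _ ⟨i, hi : i ∈ I, rfl⟩
  have hne : i.1 ≠ r.1 := fun h => hr (Fin.ext h ▸ hi)
  rw [SetLike.mem_coe, LinearMap.mem_ker]
  obtain ⟨j, hj, hα⟩ | ⟨hn, ⟨-, k, -, hα⟩ | ⟨rfl, j, hj, hα⟩⟩ := alphaR_cases ct i
  · have hiff : j ≤ r ↔ i ≤ r := by rw [Fin.le_def, Fin.le_def]; omega
    simp only [hα, partialSum_pairRoot, hiff, one_mul, sub_self]
  · have hir : ¬ i ≤ r := by rw [Fin.le_def]; omega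
    rw [hα, map_smul, partialSum_ee, if_neg hir, smul_zero]
  · have hir : ¬ i ≤ r := by rw [Fin.le_def]; omega
    have hjr : ¬ j ≤ r := fun hjr => hr <| by
      rw [show r = j from Fin.ext (by rw [Fin.le_def] at hir hjr; omega)]
      exact penultimate_mem_of_standardI hstd hi hn hj
    rw [hα, partialSum_pairRoot, if_neg hir, if_neg hjr, mul_zero, sub_self]

theorem segment_eq_mval_of_ee_mem_span (hstd : StandardI n ct I) {p : Fin n}
    (h : ee p ∈ Submodule.span ℝ (alphaR n ct '' (I : Set (Fin n)))) :
    segment I p = mval n I := by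
  refine segment_eq_mval_iff.2 fun r hpr => not_not.1 fun hr => ?_
  have hsum := partialSum_eq_zero hstd hr h
  rw [partialSum_ee, if_pos hpr] at hsum
  exact one_ne_zero hsum

theorem segment_eq_of_pairRoot_mem_span (hstd : StandardI n ct I) {c : ℝ} (hc : c * c = 1)
    {p q : Fin n} (hpq : p ≠ q)
    (h : pairRoot c p q ∈ Submodule.span ℝ (alphaR n ct '' (I : Set (Fin n)))) :
    segment I p = segment I q ∧ (c ≠ 1 → segment I p = mval n I) := by
  wlog hlt : p < q generalizing p q
  · rw [pairRoot_swap hc, Submodule.smul_mem_iff _ (neg_ne_zero.2 (left_ne_zero_of_mul_eq_one hc))]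
      at h
    obtain ⟨hseg, hlast⟩ := this hpq.symm h (hpq.lt_or_gt.resolve_left hlt)
    exact ⟨hseg.symm, fun hc1 => hseg ▸ hlast hc1⟩
  have hsum : ∀ r ∉ I, (if p ≤ r then (1 : ℝ) else 0) - c * (if q ≤ r then 1 else 0) = 0 :=
    fun r hr => partialSum_pairRoot c r p q ▸ partialSum_eq_zero hstd hr h
  refine ⟨(segment_eq_iff hlt.le).2 fun r hpr hrq => ?_,
    fun hc1 => segment_eq_mval_iff.2 fun r hpr => ?_⟩
  · by_contra hr
    simpa [hpr, hrq.not_ge] using hsum r hr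
  · by_contra hr
    have hr0 := hsum r hr
    rw [if_pos hpr] at hr0
    split_ifs at hr0
    · exact hc1 (by linarith)
    · norm_num at hr0

end SpanOfSimpleRoots

section Regularity

variable {ct : CType} {I : Finset (Fin n)} {x : V n}

/-- `Φ_I`-regularity read off the entries of a weight: the entries of each segment are distinct, and
those of the last segment have distinct absolute values and, except in type `D`, are nonzero. -/
structure SegRegular (ct : CType) (I : Finset (Fin n)) (x : V n) : Prop where
  ne : ∀ p q, p ≠ q → segment I p = segment I q → x p ≠ x q
  abs_ne : ∀ p q, p ≠ q → segment I p = mval n I → segment I q = mval n I → |x p| ≠ |x q|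
  ne_zero : ct ≠ CType.D → ∀ p, segment I p = mval n I → x p ≠ 0

theorem pairRoot_mem_Phi {c : ℝ} (hc : c * c = 1) {p q : Fin n} (hpq : p ≠ q) :
    pairRoot c p q ∈ Phi n ct := by
  have hD : pairRoot c p q ∈ DRoots n := by
    obtain rfl | rfl := mul_self_eq_one_iff.1 hc
    · exact ⟨p, q, hpq, .inr (.inl (pairRoot_one p q))⟩
    · exact ⟨p, q, hpq, .inl (pairRoot_neg_one p q)⟩
  cases ct with
  | B => exact .inl hD
  | C => exact .inl hD
  | D => exact hD

theorem exists_smul_ee_mem_Phi (hct : ct ≠ CType.D) (p : Fin n) :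
    ∃ k : ℝ, k ≠ 0 ∧ k • ee p ∈ Phi n ct := by
  cases ct with
  | B => exact ⟨1, one_ne_zero, .inr ⟨p, .inl (one_smul ℝ _)⟩⟩
  | C => exact ⟨2, two_ne_zero, .inr ⟨p, .inl rfl⟩⟩
  | D => exact absurd rfl hct

theorem exists_eq_smul_of_mem_DRoots {β : V n} (hβ : β ∈ DRoots n) :
    ∃ k : ℝ, k ≠ 0 ∧ ∃ c : ℝ, c * c = 1 ∧ ∃ p q, p ≠ q ∧ β = k • pairRoot c p q := by
  obtain ⟨p, q, hpq, rfl | rfl | rfl⟩ := hβ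
  · exact ⟨1, one_ne_zero, -1, by norm_num, p, q, hpq, by rw [pairRoot_neg_one, one_smul]⟩
  · exact ⟨1, one_ne_zero, 1, one_mul 1, p, q, hpq, by rw [pairRoot_one, one_smul]⟩
  · exact ⟨-1, by norm_num, -1, by norm_num, p, q, hpq, by rw [pairRoot_neg_one]; module⟩

theorem exists_eq_smul_of_mem_Phi {β : V n} (hβ : β ∈ Phi n ct) :
    ∃ k : ℝ, k ≠ 0 ∧ ((∃ c : ℝ, c * c = 1 ∧ ∃ p q, p ≠ q ∧ β = k • pairRoot c p q) ∨
      ct ≠ CType.D ∧ ∃ p, β = k • ee p) := by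
  have hpair (h : β ∈ DRoots n) := exists_eq_smul_of_mem_DRoots h
  cases ct with
  | B =>
    obtain hD | ⟨p, rfl | rfl⟩ := hβ
    · exact (hpair hD).imp fun _ => .imp_right .inl
    · exact ⟨1, one_ne_zero, .inr ⟨nofun, p, (one_smul ℝ _).symm⟩⟩
    · exact ⟨-1, by norm_num, .inr ⟨nofun, p, (neg_one_smul ℝ _).symm⟩⟩
  | C =>
    obtain hD | ⟨p, rfl | rfl⟩ := hβ
    · exact (hpair hD).imp fun _ => .imp_right .inl
    · exact ⟨2, two_ne_zero, .inr ⟨nofun, p, rfl⟩⟩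
    · exact ⟨-2, by norm_num, .inr ⟨nofun, p, (neg_smul _ _).symm⟩⟩
  | D => exact (hpair hβ).imp fun _ => .imp_right .inl

theorem inn_smul (x y : V n) (k : ℝ) : inn x (k • y) = k * inn x y := dotProduct_smul k x y

theorem RegI.ne (h : RegI n ct I x) {p q : Fin n} (hpq : p ≠ q)
    (hseg : segment I p = segment I q) : x p ≠ x q := by
  have hinn := h _ ⟨pairRoot_mem_Phi (one_mul 1) hpq, (GenRoot.pairRoot_one hpq hseg).mem_span⟩
  rwa [inn_pairRoot, one_mul, sub_ne_zero] at hinn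

theorem RegI.ne_neg (h : RegI n ct I x) {p q : Fin n} (hpq : p ≠ q)
    (hp : segment I p = mval n I) (hq : segment I q = mval n I) : x p ≠ -x q := by
  have hinn := h _ ⟨pairRoot_mem_Phi (by norm_num) hpq,
    (GenRoot.pairRoot_neg_one hpq hp hq).mem_span⟩
  rwa [inn_pairRoot, neg_one_mul, sub_ne_zero] at hinn

theorem RegI.ne_zero (h : RegI n ct I x) (hct : ct ≠ CType.D) {p : Fin n}
    (hp : segment I p = mval n I) : x p ≠ 0 := by
  obtain ⟨k, hk, hmem⟩ := exists_smul_ee_mem_Phi hct p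
  have hinn := h _ ⟨hmem, ((GenRoot.ee hct hp).smul hk).mem_span⟩
  rw [inn_smul, inn_ee] at hinn
  exact right_ne_zero_of_mul hinn

theorem RegI.segRegular (h : RegI n ct I x) : SegRegular ct I x where
  ne _ _ := h.ne
  abs_ne _ _ hpq hp hq :=
    abs_eq_abs.not.2 (not_or.2 ⟨h.ne hpq (hp.trans hq.symm), h.ne_neg hpq hp hq⟩)
  ne_zero hct _ := h.ne_zero hct

theorem SegRegular.regI (hstd : StandardI n ct I) (h : SegRegular ct I x) : RegI n ct I x := by
  rintro β ⟨hΦ, hspan : β ∈ Submodule.span ℝ _⟩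
  obtain ⟨k, hk, ⟨c, hc, p, q, hpq, rfl⟩ | ⟨hct, p, rfl⟩⟩ := exists_eq_smul_of_mem_Phi hΦ
  · rw [Submodule.smul_mem_iff _ hk] at hspan
    obtain ⟨hseg, hlast⟩ := segment_eq_of_pairRoot_mem_span hstd hc hpq hspan
    rw [inn_smul, inn_pairRoot]
    refine mul_ne_zero hk (sub_ne_zero.2 ?_)
    obtain rfl | rfl := mul_self_eq_one_iff.1 hc
    · rw [one_mul]
      exact h.ne p q hpq hseg
    · have hp := hlast (by norm_num)
      rw [neg_one_mul]
      exact fun heq => h.abs_ne p q hpq hp (hseg ▸ hp) (abs_eq_abs.2 (.inr heq))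
  · rw [Submodule.smul_mem_iff _ hk] at hspan
    rw [inn_smul, inn_ee]
    exact mul_ne_zero hk (h.ne_zero hct p (segment_eq_mval_of_ee_mem_span hstd hspan))

theorem abs_eq_one_of_mul_self {c : ℝ} (hc : c * c = 1) : |c| = 1 :=
  (abs_eq zero_le_one).2 (mul_self_eq_one_iff.1 hc)

theorem abs_sRefl_ee (p r : Fin n) (x : V n) : |sRefl (ee p) x r| = |x r| := by
  rw [sRefl_ee, Function.update_apply]
  split_ifs with h
  · rw [h, abs_neg]
  · rfl

theorem abs_sRefl_pairRoot {c : ℝ} (hc : c * c = 1) {p q : Fin n} (hpq : p ≠ q) (x : V n)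
    (r : Fin n) : |sRefl (pairRoot c p q) x r| = |x (Equiv.swap p q r)| := by
  rw [sRefl_pairRoot_apply hc hpq, Equiv.swap_apply_def, apply_ite abs, apply_ite abs, abs_mul,
    abs_mul, abs_eq_one_of_mul_self hc, one_mul, one_mul, apply_ite x, apply_ite x,
    apply_ite abs, apply_ite abs]

theorem SegRegular.sRefl_ee (h : SegRegular ct I x) {i : Fin n}
    (hi : ∀ p, segment I p = segment I i → |x p| = |x i| → p = i) :
    SegRegular ct I (sRefl (ee i) x) where
  ne p q hpq hseg := by
    have habs {r : Fin n} (hr : r ≠ i) (hri : segment I r = segment I i) : x r ≠ -x i :=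
      fun heq => hr (hi r hri (by rw [heq, abs_neg]))
    rw [JantzenBlocks.sRefl_ee, Function.update_apply, Function.update_apply]
    split_ifs with hp hq hq
    · exact absurd (hp.trans hq.symm) hpq
    · exact (habs hq (hp ▸ hseg.symm)).symm
    · exact habs hp (hq ▸ hseg)
    · exact h.ne p q hpq hseg
  abs_ne p q hpq hp hq := by
    rw [abs_sRefl_ee, abs_sRefl_ee]
    exact h.abs_ne p q hpq hp hq
  ne_zero hct p hp := by
    rw [← abs_ne_zero, abs_sRefl_ee, abs_ne_zero]
    exact h.ne_zero hct p hp

theorem SegRegular.eq_of_abs_eq (h : SegRegular ct I x) {p q : Fin n} (hp : segment I p = mval n I)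
    (hq : segment I q = mval n I) (heq : |x p| = |x q|) : p = q :=
  not_not.1 fun hpq => h.abs_ne p q hpq hp hq heq

theorem segment_swap {p q : Fin n} (hseg : segment I p = segment I q) (r : Fin n) :
    segment I (Equiv.swap p q r) = segment I r := by
  rw [Equiv.swap_apply_def]
  split_ifs with hp hq
  · rw [hp, hseg]
  · rw [hq, hseg]
  · rfl

theorem SegRegular.sRefl_pairRoot (h : SegRegular ct I x) {c : ℝ} (hc : c * c = 1) {p q : Fin n}
    (hpq : p ≠ q) (hseg : segment I p = segment I q) (hlast : c ≠ 1 → segment I p = mval n I) :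
    SegRegular ct I (sRefl (pairRoot c p q) x) := by
  have habs_ne : ∀ r s, r ≠ s → segment I r = mval n I → segment I s = mval n I →
      |sRefl (pairRoot c p q) x r| ≠ |sRefl (pairRoot c p q) x s| := fun r s hrs hr hs => by
    rw [abs_sRefl_pairRoot hc hpq, abs_sRefl_pairRoot hc hpq]
    exact h.abs_ne _ _ ((Equiv.swap p q).injective.ne hrs) ((segment_swap hseg r).trans hr)
      ((segment_swap hseg s).trans hs)
  refine ⟨fun r s hrs hrs_seg => ?_, habs_ne, fun hct r hr => ?_⟩
  · by_cases hr : segment I r = mval n I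
    · exact fun heq => habs_ne r s hrs hr (hrs_seg ▸ hr) (congrArg _ heq)
    · have hswap : ∀ r, segment I r ≠ mval n I →
          sRefl (pairRoot c p q) x r = x (Equiv.swap p q r) := fun r hr => by
        rw [sRefl_pairRoot_apply hc hpq, Equiv.swap_apply_def, apply_ite x, apply_ite x]
        obtain rfl | hc1 := eq_or_ne c 1
        · simp only [one_mul]
        · have hrp : r ≠ p := fun h => hr (h ▸ hlast hc1)
          have hrq : r ≠ q := fun h => hr (h ▸ hseg ▸ hlast hc1)
          simp only [hrp, hrq, if_false]
      rw [hswap r hr, hswap s (hrs_seg ▸ hr)]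
      exact h.ne _ _ ((Equiv.swap p q).injective.ne hrs)
        ((segment_swap hseg r).trans (hrs_seg.trans (segment_swap hseg s).symm))
  · rw [← abs_ne_zero, abs_sRefl_pairRoot hc hpq, abs_ne_zero]
    exact h.ne_zero hct _ ((segment_swap hseg r).trans hr)

theorem SegRegular.sRefl_alphaR (hstd : StandardI n ct I) (h : SegRegular ct I x) {i : Fin n}
    (hi : i ∈ I) : SegRegular ct I (sRefl (alphaR n ct i) x) := by
  obtain ⟨j, hj, hα⟩ | ⟨hn, hD | hD⟩ := alphaR_cases ct i
  · rw [hα]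
    refine h.sRefl_pairRoot (one_mul 1) (Fin.ne_of_val_ne (by omega)) ?_ (absurd rfl)
    refine (segment_eq_iff (Fin.le_def.2 (by omega))).2 fun r hr hrj => ?_
    rwa [show r = i from Fin.ext (by rw [Fin.le_def] at hr; rw [Fin.lt_def] at hrj; omega)]
  all_goals
    have hlast : segment I i = mval n I := segment_eq_mval_iff.2 fun r hr => by
      rwa [show r = i from Fin.ext (by rw [Fin.le_def] at hr; omega)]
  · obtain ⟨-, k, hk, hα⟩ := hD
    rw [hα, sRefl_smul hk]
    exact h.sRefl_ee fun p hp => h.eq_of_abs_eq (hp.trans hlast) hlast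
  · obtain ⟨rfl, j, hj, hα⟩ := hD
    obtain rfl | hji := eq_or_ne j i
    · exact ⟨fun p q hpq => absurd (Fin.ext (by omega)) hpq,
        fun p q hpq => absurd (Fin.ext (by omega)) hpq, absurd rfl⟩
    have hjlast : segment I j = mval n I := segment_eq_mval_iff.2 fun r hr => by
      obtain rfl | rfl : r = j ∨ r = i := by simp only [Fin.ext_iff, Fin.le_def] at hr ⊢; omega
      exacts [penultimate_mem_of_standardI hstd hi hn hj, hi]
    rw [hα]
    exact h.sRefl_pairRoot (by norm_num) hji (hjlast.trans hlast.symm) fun _ => hjlast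

theorem SegRegular.of_wIOrb (hstd : StandardI n ct I) (h : SegRegular ct I x) {y : V n}
    (hxy : WIOrb n ct I x y) : SegRegular ct I y := by
  induction hxy with
  | refl => exact h
  | tail _ hstep ih =>
    obtain ⟨i, hi, rfl⟩ := hstep
    exact ih.sRefl_alphaR hstd hi

end Regularity

section LinkedRoots

variable {ct : CType} {I : Finset (Fin n)} {x y z β : V n}

theorem Conn.refl (hx : RegI n ct I x) : Conn n ct I x x := ⟨hx, hx, .refl⟩

theorem Conn.trans (hxy : Conn n ct I x y) (hyz : Conn n ct I y z) : Conn n ct I x z :=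
  ⟨hxy.1, hyz.2.1, hxy.2.2.trans hyz.2.2⟩

theorem GenRoot.regI_sRefl {v : V n} (hv : GenRoot ct I v) (hstd : StandardI n ct I)
    (hx : RegI n ct I x) : RegI n ct I (sRefl v x) :=
  (hx.segRegular.of_wIOrb hstd (hv.wIOrb x)).regI hstd

theorem GenRoot.conn_sRefl {v : V n} (hv : GenRoot ct I v) (hstd : StandardI n ct I)
    (hx : RegI n ct I x) : Conn n ct I x (sRefl v x) :=
  have hvx := hv.regI_sRefl hstd hx
  ⟨hx, hvx, .single ⟨hx, hvx, .inl (hv.wIOrb x)⟩⟩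

theorem ExcBC.exists_pair (hstd : StandardI n ct I) {shortR : Fin n → V n}
    (hshort : ∀ i r, r ≠ i → shortR i r = 0) (h : ExcBC n ct I shortR x β) :
    ∃ i j, (∀ r, β r ≠ 0 → r = i ∨ r = j) ∧ x i ≠ 0 ∧
      (segment I j = segment I i ∧ x j = 0 ∨ segment I j = mval n I ∧ x j ≠ 0) ∧
      nsl n ct I x (segment I i) 0 + nsl n ct I x (mval n I) |x i| = 1 := by
  obtain ⟨s, -, -, a, ha, -, hcount, h⟩ := h
  simp only [inSeg_iff hstd] at h
  have hsupp : ∀ i j, β = shortR i ∨ β = ee i + ee j ∨ β = ee i - ee j →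
      ∀ r, β r ≠ 0 → r = i ∨ r = j := by
    intro i j hβ r hr
    contrapose! hr
    obtain rfl | rfl | rfl := hβ
    · exact hshort i r hr.1
    · simp [ee_apply, hr]
    · simp [ee_apply, hr]
  obtain ⟨i, j, rfl, hj, hi, hxj, hβ⟩ | ⟨i, j, rfl, hj, hx, hβ⟩ | ⟨i, j, rfl, hj, hx, hβ⟩ := h
  all_goals
    have habs : |x i| = a := by grind
    refine ⟨i, j, hsupp i j (by tauto), abs_pos.1 (habs ▸ ha), ?_, habs ▸ hcount⟩
  · exact .inl ⟨hj, hxj⟩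
  all_goals exact .inr ⟨hj, by grind⟩

theorem ExcD.exists_pair (hstd : StandardI n CType.D I) (h : ExcD n I x β) :
    ∃ i j, (∀ r, β r ≠ 0 → r = i ∨ r = j) ∧ x i ≠ 0 ∧
      (segment I j = segment I i ∧ x j = 0 ∨ segment I j = mval n I ∧ x j ≠ 0) ∧
      ∃ l, segment I l = segment I i ∧ x l = 0 := by
  obtain ⟨s, -, -, a, ha, -, -, -, -, i, j, k, l, hi, hj, hk, -, hxj, -, h⟩ := h
  rw [inSeg_iff hstd] at hi hj hk
  subst hi
  have hxi : x i ≠ 0 := by grind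
  have hxk : x k ≠ 0 := by grind
  obtain hβ | hβ : β = ee i + ee j ∨ β = ee i + ee k ∨ β = ee i - ee k := by tauto
  · refine ⟨i, j, fun r hr => ?_, hxi, .inl ⟨hj, hxj⟩, j, hj, hxj⟩
    contrapose! hr
    simp [hβ, ee_apply, hr]
  · refine ⟨i, k, fun r hr => ?_, hxi, .inr ⟨hk, hxk⟩, j, hj, hxj⟩
    contrapose! hr
    obtain rfl | rfl := hβ <;> simp [ee_apply, hr]

theorem Exc.exists_pair (hstd : StandardI n ct I) (h : Exc n ct I x β) :
    ∃ i j, (∀ r, β r ≠ 0 → r = i ∨ r = j) ∧ x i ≠ 0 ∧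
      (segment I j = segment I i ∧ x j = 0 ∨ segment I j = mval n I ∧ x j ≠ 0) ∧
      (ct ≠ CType.D → nsl n ct I x (segment I i) 0 + nsl n ct I x (mval n I) |x i| = 1) ∧
      (ct = CType.D → ∃ l, segment I l = segment I i ∧ x l = 0) := by
  cases ct with
  | B =>
    obtain ⟨i, j, hβ, hi, hj, hcount⟩ := ExcBC.exists_pair hstd (by simp +contextual [ee_apply]) h
    exact ⟨i, j, hβ, hi, hj, fun _ => hcount, nofun⟩
  | C =>
    obtain ⟨i, j, hβ, hi, hj, hcount⟩ := ExcBC.exists_pair hstd (by simp +contextual [ee_apply]) h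
    exact ⟨i, j, hβ, hi, hj, fun _ => hcount, nofun⟩
  | D =>
    obtain ⟨i, j, hβ, hi, hj, hl⟩ := ExcD.exists_pair hstd h
    exact ⟨i, j, hβ, hi, hj, absurd rfl, fun _ => hl⟩

theorem Exc.segment_eq (hstd : StandardI n ct I) (h : Exc n ct I x β) {p q : Fin n}
    (hp : β p ≠ 0) (hq : β q ≠ 0) (hxp : x p = 0) : segment I p = segment I q := by
  obtain ⟨i, j, hβ, hi, hj, -⟩ := h.exists_pair hstd
  have hpj : p = j := (hβ p hp).resolve_left fun hpi => hi (hpi ▸ hxp)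
  have hseg : segment I p = segment I i := hpj ▸ (hj.resolve_right fun h => h.2 (hpj ▸ hxp)).1
  obtain rfl | rfl := hβ q hq
  exacts [hseg, hpj ▸ rfl]

theorem Exc.nsl_add_nsl_eq_one (hstd : StandardI n ct I) (hct : ct ≠ CType.D)
    (h : Exc n ct I x β) {p q : Fin n} (hp : β p ≠ 0) (hq : β q ≠ 0) (hpq : p ≠ q)
    (hxq : x q = 0) : nsl n ct I x (segment I p) 0 + nsl n ct I x (mval n I) |x p| = 1 := by
  obtain ⟨i, j, hβ, hi, -, hcount, -⟩ := h.exists_pair hstd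
  obtain rfl : q = j := (hβ q hq).resolve_left fun hqi => hi (hqi ▸ hxq)
  obtain rfl : p = i := (hβ p hp).resolve_right hpq
  exact hcount hct

theorem Exc.exists_zero (hstd : StandardI n CType.D I) (h : Exc n CType.D I x β) {p : Fin n}
    (hp : β p ≠ 0) (hseg : segment I p ≠ mval n I) :
    ∃ l, segment I l = segment I p ∧ x l = 0 := by
  obtain ⟨i, j, hβ, -, hj, -, hl⟩ := h.exists_pair hstd
  obtain rfl | rfl := hβ p hp
  · exact hl rfl
  · exact (hj.resolve_right fun h => hseg h.1).1 ▸ hl rfl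

theorem pairRoot_mem_PhiPos {c : ℝ} (hc : c * c = 1) {p q : Fin n} (hpq : p < q) :
    pairRoot c p q ∈ PhiPos n ct := by
  refine ⟨pairRoot_mem_Phi hc hpq.ne, p, ?_, fun r hr => ?_⟩
  · simp [pairRoot_apply, hpq.ne]
  · simp [pairRoot_apply, hr.ne, (hr.trans hpq).ne]

theorem conn_sRefl_pairRoot (hstd : StandardI n ct I) {c : ℝ} (hc : c * c = 1) {p q : Fin n}
    (hpq : p ≠ q) (hx : RegI n ct I x) (hy : RegI n ct I (sRefl (pairRoot c p q) x))
    (hexc : ∀ β : V n, β p ≠ 0 → β q ≠ 0 → ¬ Exc n ct I x β) :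
    Conn n ct I x (sRefl (pairRoot c p q) x) := by
  wlog hlt : p < q generalizing p q
  · rw [sRefl_pairRoot_swap hc] at hy ⊢
    exact this hpq.symm hy (fun β hq hp => hexc β hp hq) (hpq.lt_or_gt.resolve_left hlt)
  by_cases hspan : pairRoot c p q ∈ Submodule.span ℝ (alphaR n ct '' (I : Set (Fin n)))
  · obtain ⟨hseg, hlast⟩ := segment_eq_of_pairRoot_mem_span hstd hc hpq hspan
    exact (GenRoot.pairRoot hc hpq hseg hlast).conn_sRefl hstd hx
  obtain hfix | hmove := eq_or_ne (sRefl (pairRoot c p q) x) x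
  · rw [hfix]
    exact .refl hx
  have hexc' : ¬ Exc n ct I x (pairRoot c p q) := hexc _ (by simp [pairRoot_apply, hpq])
    (by simp [pairRoot_apply, hpq.symm, left_ne_zero_of_mul_eq_one hc])
  have hlinked : LinkedRoot n ct I x (pairRoot c p q) := by
    rw [LinkedRoot, if_pos hstd]
    exact ⟨hx, pairRoot_mem_PhiPos hc hlt, fun h => hspan h.2, hy, hmove, hexc'⟩
  exact ⟨hx, hy, .single ⟨hx, hy, .inr ⟨_, hlinked, .refl⟩⟩⟩

theorem conn_sRefl_pairRoot_of_eq_zero (hstd : StandardI n ct I) {c : ℝ} (hc : c * c = 1)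
    {p q : Fin n} (hseg : segment I p ≠ segment I q) (hxp : x p = 0) (hx : RegI n ct I x)
    (hy : RegI n ct I (sRefl (pairRoot c p q) x)) : Conn n ct I x (sRefl (pairRoot c p q) x) :=
  conn_sRefl_pairRoot hstd hc (fun h => hseg (h ▸ rfl)) hx hy
    fun _ hp hq hexc => hseg (hexc.segment_eq hstd hp hq hxp)

end LinkedRoots

section SignChange

variable {ct : CType} {I : Finset (Fin n)} {x : V n}

theorem exists_eq_mul_of_abs_eq {a b : ℝ} (h : |a| = |b|) : ∃ d : ℝ, d * d = 1 ∧ a = d * b := by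
  obtain rfl | rfl := abs_eq_abs.1 h
  · exact ⟨1, one_mul 1, (one_mul a).symm⟩
  · exact ⟨-1, by norm_num, (neg_one_mul b).symm⟩

theorem GenRoot.conn_sRefl_symm {v : V n} (hv : GenRoot ct I v) (hstd : StandardI n ct I)
    (hx : RegI n ct I x) : Conn n ct I (sRefl v x) x := by
  simpa only [sRefl_involutive v x] using hv.conn_sRefl hstd (hv.regI_sRefl hstd hx)

theorem SegRegular.sRefl_pairRoot_of_eq_zero (h : SegRegular ct I x) {c : ℝ} (hc : c * c = 1)
    {p q : Fin n} (hseg : segment I p ≠ segment I q) (hxp : x p = 0)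
    (hqzero : ∀ r, segment I r = segment I q → x r ≠ 0)
    (hqlast : ct ≠ CType.D → segment I q ≠ mval n I)
    (hpne : ∀ r, segment I r = segment I p → x r ≠ c * x q)
    (hpabs : segment I p = mval n I → ∀ r, segment I r = segment I p → |x r| ≠ |x q|) :
    SegRegular ct I (sRefl (pairRoot c p q) x) := by
  have hpq : p ≠ q := fun h => hseg (h ▸ rfl)
  obtain ⟨hne, habs, hzero⟩ := h
  constructor
  · intro r s hrs hseg_rs
    simp only [sRefl_pairRoot_apply hc hpq, hxp, mul_zero]
    grind
  · intro r s hrs hr hs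
    simp only [abs_sRefl_pairRoot hc hpq, Equiv.swap_apply_def]
    grind [abs_zero, abs_eq_zero]
  · intro hct r hr
    simp only [sRefl_pairRoot_apply hc hpq, hxp, mul_zero]
    grind

theorem conn_sRefl_ee_of_last (hstd : StandardI n ct I) (hx : RegI n ct I x) {i j : Fin n}
    (hij : i ≠ j) (hi : segment I i = mval n I) (hj : segment I j = mval n I) (hxj : x j = 0) :
    Conn n ct I x (sRefl (ee i) x) := by
  have hpos : GenRoot ct I (pairRoot 1 i j) := .pairRoot_one hij (hi.trans hj.symm)
  have hneg : GenRoot ct I (pairRoot (-1) i j) := .pairRoot_neg_one hij hi hj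
  rw [sRefl_ee_eq_sRefl_pairRoot (one_mul 1) hij hxj]
  exact (hpos.conn_sRefl hstd hx).trans (hneg.conn_sRefl hstd (hpos.regI_sRefl hstd hx))

theorem conn_sRefl_ee_of_typeBC (hstd : StandardI n ct I) (hct : ct ≠ CType.D)
    (hx : RegI n ct I x) {i j k : Fin n} (hT : RegI n ct I (sRefl (ee i) x)) (hij : i ≠ j)
    (hj : segment I j = segment I i) (hxj : x j = 0) (hk : segment I k = mval n I)
    (hxk : |x k| = |x i|) : Conn n ct I x (sRefl (ee i) x) := by
  have hgen : GenRoot ct I (pairRoot 1 i j) := .pairRoot_one hij hj.symm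
  have hy : sRefl (pairRoot (-1) i j) x = sRefl (pairRoot 1 i j) (sRefl (ee i) x) := by
    rw [sRefl_ee_eq_sRefl_pairRoot (c := -1) (by norm_num) hij hxj, neg_neg, sRefl_involutive]
  refine .trans (conn_sRefl_pairRoot hstd (c := -1) (by norm_num) hij hx
    (hy ▸ hgen.regI_sRefl hstd hT) fun β hβi hβj hexc => ?_) (hy ▸ hgen.conn_sRefl_symm hstd hT)
  have hcount := hexc.nsl_add_nsl_eq_one hstd hct hβi hβj hij hxj
  have hpos₁ := (nsl_pos_iff hstd).2 ⟨j, hj, abs_eq_zero.2 hxj⟩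
  have hpos₂ := (nsl_pos_iff hstd).2 ⟨k, hk, hxk⟩
  omega

theorem sRefl_pairRoot_sRefl_pairRoot_eq {d : ℝ} (hd : d * d = 1) {i j k : Fin n} (hij : i ≠ j)
    (hjk : j ≠ k) (hki : k ≠ i) (hxj : x j = 0) (hxk : x k = d * x i) :
    sRefl (pairRoot d k i) (sRefl (pairRoot (-d) j k) x) =
      sRefl (pairRoot 1 i j) (sRefl (ee i) x) := by
  have hd' : -d * -d = 1 := by rw [neg_mul_neg, hd]
  ext r
  simp only [sRefl_pairRoot_apply hd hki, sRefl_pairRoot_apply hd' hjk,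
    sRefl_pairRoot_apply (one_mul 1) hij, sRefl_ee, Function.update_apply]
  grind

theorem conn_sRefl_ee_of_zero_mem_segment (hstd : StandardI n ct I) (hx : RegI n ct I x)
    {i j k : Fin n} (hxi : x i ≠ 0) (huniq : ∀ p, segment I p = segment I i → |x p| = |x i| → p = i)
    (hj : segment I j = segment I i) (hxj : x j = 0) (hk : segment I k ≠ segment I i)
    (hxk : |x k| = |x i|) (hkzero : ∀ r, segment I r = segment I k → x r ≠ 0) :
    Conn n ct I x (sRefl (ee i) x) := by
  have hij : i ≠ j := fun h => hxi (h ▸ hxj)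
  have hT : RegI n ct I (sRefl (ee i) x) := (hx.segRegular.sRefl_ee huniq).regI hstd
  by_cases hi : segment I i = mval n I
  · exact conn_sRefl_ee_of_last hstd hx hij hi (hj.trans hi) hxj
  by_cases hklast : ct ≠ CType.D ∧ segment I k = mval n I
  · exact conn_sRefl_ee_of_typeBC hstd hklast.1 hx hT hij hj hxj hklast.2 hxk
  obtain ⟨d, hd, hxk'⟩ := exists_eq_mul_of_abs_eq hxk
  have hd' : -d * -d = 1 := by rw [neg_mul_neg, hd]
  have hjk : segment I j ≠ segment I k := hj ▸ hk.symm
  have hne : j ≠ k := fun h => hjk (h ▸ rfl)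
  have hgen : GenRoot ct I (pairRoot 1 i j) := .pairRoot_one hij hj.symm
  have hdetour := sRefl_pairRoot_sRefl_pairRoot_eq hd hij hne (fun h => hk (h ▸ rfl)) hxj hxk'
  have hy : RegI n ct I (sRefl (pairRoot (-d) j k) x) := by
    refine (hx.segRegular.sRefl_pairRoot_of_eq_zero hd' hjk hxj hkzero (not_and.1 hklast)
      (fun r hr hxr => ?_) fun hjlast => absurd (hj ▸ hjlast) hi).regI hstd
    have hxr' : x r = -x i := by rw [hxr, hxk']; linear_combination (-x i) * hd
    have hri : r = i := huniq r (hr.trans hj) (by rw [hxr', abs_neg])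
    exact hxi (self_eq_neg.1 (hri ▸ hxr'))
  refine (conn_sRefl_pairRoot_of_eq_zero hstd hd' hjk hxj hx hy).trans
    (.trans (conn_sRefl_pairRoot_of_eq_zero hstd hd hk ?_ hy
      (hdetour ▸ hgen.regI_sRefl hstd hT)) (hdetour ▸ hgen.conn_sRefl_symm hstd hT))
  rw [sRefl_pairRoot_apply hd' hne, if_neg hne.symm, if_pos rfl, hxj, mul_zero]

theorem conn_sRefl_ee_of_exchange (hstd : StandardI n ct I) (hx : RegI n ct I x) {c : ℝ}
    (hc : c * c = 1) {i j : Fin n} (hT : RegI n ct I (sRefl (ee i) x))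
    (hizero : ∀ r, segment I r = segment I i → x r ≠ 0)
    (hilast : ct ≠ CType.D → segment I i ≠ mval n I) (hj : segment I j ≠ segment I i)
    (hxj : x j = 0) (hjne : ∀ r, segment I r = segment I j → x r ≠ c * x i)
    (hjabs : segment I j = mval n I → ∀ r, segment I r = segment I j → |x r| ≠ |x i|) :
    Conn n ct I x (sRefl (ee i) x) := by
  have hij : i ≠ j := fun h => hj (h ▸ rfl)
  have hy : RegI n ct I (sRefl (pairRoot c j i) x) :=
    (hx.segRegular.sRefl_pairRoot_of_eq_zero hc hj hxj hizero hilast hjne hjabs).regI hstd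
  have hxy := conn_sRefl_pairRoot_of_eq_zero hstd hc hj hxj hx hy
  rw [sRefl_pairRoot_swap hc] at hxy hy
  have hyi : sRefl (pairRoot c i j) x i = 0 := by
    rw [sRefl_pairRoot_apply hc hij, if_pos rfl, hxj, mul_zero]
  rw [sRefl_ee_eq_sRefl_pairRoot hc hij hxj] at hT ⊢
  exact hxy.trans
    (conn_sRefl_pairRoot_of_eq_zero hstd (by rw [neg_mul_neg, hc]) hj.symm hyi hy hT)

theorem conn_sRefl_ee_of_typeD (hstd : StandardI n CType.D I) (hx : RegI n CType.D I x)
    {i j k : Fin n} (hxi : x i ≠ 0) (hT : RegI n CType.D I (sRefl (ee i) x))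
    (hizero : ∀ r, segment I r = segment I i → x r ≠ 0) (hi : segment I i ≠ mval n I)
    (hj : segment I j = mval n I) (hxj : x j = 0) (hk : segment I k = mval n I)
    (hxk : |x k| = |x i|) : Conn n CType.D I x (sRefl (ee i) x) := by
  obtain ⟨d, hd, hxk'⟩ := exists_eq_mul_of_abs_eq hxk
  have hd' : -d * -d = 1 := by rw [neg_mul_neg, hd]
  have hik : i ≠ k := fun h => hi (h ▸ hk)
  have hij : i ≠ j := fun h => hi (h ▸ hj)
  have hkj : k ≠ j := fun h => hxi (abs_eq_zero.1 (by rw [← hxk, h, hxj, abs_zero]))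
  have hTj : sRefl (ee i) x j = 0 := by rw [sRefl_ee, Function.update_of_ne hij.symm, hxj]
  have hy : sRefl (pairRoot (-d) i k) x = sRefl (ee k) (sRefl (ee i) x) := by
    ext r
    simp only [sRefl_pairRoot_apply hd' hik, sRefl_ee, Function.update_apply]
    grind
  have hTy := conn_sRefl_ee_of_last hstd hT hkj hk hj hTj
  have hyj : sRefl (ee k) (sRefl (ee i) x) j = 0 := by
    rw [sRefl_ee, Function.update_of_ne hkj.symm, hTj]
  have hyT := conn_sRefl_ee_of_last hstd hTy.2.1 hkj hk hj hyj
  rw [sRefl_involutive, ← hy] at hyT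
  refine (conn_sRefl_pairRoot hstd hd' hik hx hyT.1 fun β hβi _ hexc => ?_).trans hyT
  obtain ⟨l, hl, hxl⟩ := hexc.exists_zero hstd hβi hi
  exact hizero l hl hxl

theorem conn_sRefl_ee_of_zero_mem_other_segment (hstd : StandardI n ct I) (hx : RegI n ct I x)
    {i j : Fin n} (hxi : x i ≠ 0) (huniq : ∀ p, segment I p = segment I i → |x p| = |x i| → p = i)
    (hizero : ∀ r, segment I r = segment I i → x r ≠ 0) (hj : segment I j ≠ segment I i)
    (hxj : x j = 0) (hjuniq : ∀ p, segment I p = segment I j → |x p| = |x i| →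
      ∀ q, segment I q = segment I j → |x q| = |x i| → p = q) :
    Conn n ct I x (sRefl (ee i) x) := by
  have hT : RegI n ct I (sRefl (ee i) x) := (hx.segRegular.sRefl_ee huniq).regI hstd
  by_cases hilast : ct ≠ CType.D ∧ segment I i = mval n I
  · exact (GenRoot.ee hilast.1 hilast.2).conn_sRefl hstd hx
  rw [not_and] at hilast
  by_cases hk : ∃ k, segment I k = segment I j ∧ |x k| = |x i|
  · obtain ⟨k, hkj, hxk⟩ := hk
    by_cases hjlast : segment I j = mval n I
    · obtain rfl : ct = CType.D := not_not.1 fun hct => hx.ne_zero hct hjlast hxj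
      exact conn_sRefl_ee_of_typeD hstd hx hxi hT hizero (fun h => hj (hjlast.trans h.symm)) hjlast
        hxj (hkj.trans hjlast) hxk
    · obtain ⟨d, hd, hxk'⟩ := exists_eq_mul_of_abs_eq hxk
      refine conn_sRefl_ee_of_exchange hstd hx (c := -d) (by rw [neg_mul_neg, hd]) hT hizero hilast
        hj hxj (fun r hr hxr => ?_) fun h => absurd h hjlast
      have hxrk : x r = -x k := by rw [hxr, hxk', neg_mul]
      have hrk : r = k := hjuniq r hr (by rw [hxrk, abs_neg, hxk]) k hkj hxk
      have hxk0 : x k = 0 := self_eq_neg.1 (hrk ▸ hxrk)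
      exact hxi (abs_eq_zero.1 (by rw [← hxk, hxk0, abs_zero]))
  · push Not at hk
    exact conn_sRefl_ee_of_exchange hstd hx (one_mul 1) hT hizero hilast hj hxj
      (fun r hr hxr => hk r hr (by rw [hxr, one_mul])) fun _ => hk

end SignChange

theorem statement0_general (n : ℕ) (ct : CType) (I : Finset (Fin n)) (lam : V n)
    (hstd : StandardI n ct I) (hreg : RegI n ct I lam) (i : Fin n) (hi : lam i ≠ 0)
    (s : ℕ) (hseg : InSeg n ct I s i) (t : ℕ)
    (h1 : nsl n ct I lam s |lam i| = 1)
    (h2 : nsl n ct I lam s 0 + nsl n ct I lam t 0 = 1)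
    (h3 : 1 ≤ nsl n ct I lam t 0 + nsl n ct I lam t |lam i|)
    (h4 : nsl n ct I lam t 0 + nsl n ct I lam t |lam i| ≤ 2) :
    Conn n ct I lam (sRefl (ee i) lam) := by
  obtain rfl := (inSeg_iff hstd).1 hseg
  have hts : t ≠ segment I i := fun h => by rw [h] at h2; omega
  have huniq : ∀ p, segment I p = segment I i → |lam p| = |lam i| → p = i :=
    fun p hp hxp => (nsl_le_one_iff hstd).1 h1.le p hp hxp i rfl rfl
  obtain ⟨hs0, ht0⟩ | ⟨hs0, ht0⟩ := Nat.add_eq_one_iff.1 h2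
  · obtain ⟨j, rfl, hxj⟩ := (nsl_pos_iff hstd).1 (ht0 ▸ one_pos)
    exact conn_sRefl_ee_of_zero_mem_other_segment hstd hreg hi huniq
      (fun r hr => abs_ne_zero.1 ((nsl_eq_zero_iff hstd).1 hs0 r hr)) hts (abs_eq_zero.1 hxj)
      ((nsl_le_one_iff hstd).1 (by omega))
  · obtain ⟨j, hj, hxj⟩ := (nsl_pos_iff hstd).1 (hs0 ▸ one_pos)
    obtain ⟨k, rfl, hxk⟩ := (nsl_pos_iff hstd).1 (by omega : 0 < nsl n ct I lam t |lam i|)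
    exact conn_sRefl_ee_of_zero_mem_segment hstd hreg hi huniq hj (abs_eq_zero.1 hxj) hts hxk
      fun r hr => abs_ne_zero.1 ((nsl_eq_zero_iff hstd).1 ht0 r hr)

/-- Lemma 4.8 / `cclem2`. -/
theorem statement0 (n : ℕ) (ct : CType) (I J : Finset (Fin n)) (lam lbar : V n)
    (hstd : StandardI n ct I)
    (hint : IntegralW n ct lam) (hreg : RegI n ct I lam)
    (horb : WOrb n ct lam lbar) (hdom : DominantW n ct lbar)
    (hJ : ∀ i : Fin n, i ∈ J ↔ inn lbar (alphaR n ct i) = 0)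
    (i : Fin n) (a : ℝ) (ha : a = |lam i|) (hane : a ≠ 0)
    (s : ℕ) (hs1 : 1 ≤ s) (hsm : s ≤ mval n I) (hseg : InSeg n ct I s i)
    (t : ℕ) (ht1 : 1 ≤ t) (htm : t ≤ mval n I)
    (h1 : nsl n ct I lam s a = 1)
    (h2 : nsl n ct I lam s 0 + nsl n ct I lam t 0 = 1)
    (h3 : 1 ≤ nsl n ct I lam t 0 + nsl n ct I lam t a)
    (h4 : nsl n ct I lam t 0 + nsl n ct I lam t a ≤ 2) :
    Conn n ct I lam (sRefl (ee i) lam) := by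
  subst ha
  exact statement0_general n ct I lam hstd hreg i (abs_ne_zero.1 hane) s hseg t h1 h2 h3 h4

end JantzenBlocks
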